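/- Let S ⊆ ℤⁿ be a discrete midpoint convex set and α a positive integer. Then the scaled set S^α = {x ∈ ℤⁿ : αx ∈ S} is discrete midpoint convex. -/

import Mathlib

/-- The ℓ∞-norm of an integer vector, as a natural number. -/
def linf {n : ℕ} (z : Fin n → ℤ) : ℕ :=
  Finset.univ.sup fun i => (z i).natAbs

/-- Componentwise round-up of (x+y)/2. -/
def avgUp {n : ℕ} (x y : Fin n → ℤ) : Fin n → ℤ :=
  fun i => ⌈((x i + y i : ℚ)) / 2⌉

/-- Componentwise round-down of (x+y)/2. -/
def avgDown {n : ℕ} (x y : Fin n → ℤ) : Fin n → ℤ :=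
  fun i => ⌊((x i + y i : ℚ)) / 2⌋

/-- A set `S ⊆ ℤⁿ` is discrete midpoint convex. -/
def DMCSet {n : ℕ} (S : Set (Fin n → ℤ)) : Prop :=
  ∀ ⦃x⦄, x ∈ S → ∀ ⦃y⦄, y ∈ S → 2 ≤ linf (x - y) →
    avgUp x y ∈ S ∧ avgDown x y ∈ S

/-- An integer function vanishing at `0` whose increments are all `0` or `1`. -/
def IsStep (c : ℤ → ℤ) : Prop :=
  c 0 = 0 ∧ ∀ k, c k ≤ c (k + 1) ∧ c (k + 1) ≤ c k + 1

lemma IsStep.diff_bounds {c : ℤ → ℤ} (hc : IsStep c) {a b : ℤ} (hab : a ≤ b) :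
    c a ≤ c b ∧ c b - c a ≤ b - a := by
  induction b, hab using Int.leInduction with
  | base => simp
  | succ b _ ih => have := hc.2 b; omega

lemma isStep_min_one : IsStep fun k => min k 1 :=
  ⟨by simp, fun k => by dsimp only; omega⟩

lemma isStep_sub_one : IsStep fun k => max (k - 1) 0 :=
  ⟨by simp, fun k => by dsimp only; omega⟩

lemma IsStep.shift {c : ℤ → ℤ} (hc : IsStep c) : IsStep fun k => c (k + 1) - c 1 :=
  ⟨by simp, fun k => by have := hc.2 (k + 1); dsimp only; omega⟩

lemma IsStep.reverse {c : ℤ → ℤ} (hc : IsStep c) (m : ℤ) :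
    IsStep fun k => k - c m + c (m - k) := by
  refine ⟨by simp, fun k => ?_⟩
  have := hc.2 (m - (k + 1))
  rw [show m - (k + 1) + 1 = m - k by ring] at this
  dsimp only
  omega

lemma isStep_mul_ediv {k a : ℤ} (ha : 0 < a) (hk : 0 ≤ k) (hka : k ≤ a) :
    IsStep fun j => k * j / a := by
  refine ⟨by simp, fun j => ⟨Int.ediv_le_ediv ha (by nlinarith), ?_⟩⟩
  calc k * (j + 1) / a ≤ (k * j + a * 1) / a := Int.ediv_le_ediv ha (by nlinarith)
    _ = k * j / a + 1 := by rw [Int.add_mul_ediv_left _ _ ha.ne']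

/-- The displacement, in a coordinate where two points of `ℓ∞`-distance `m` differ by `t`, of the
point that the step function `c` selects between them. -/
def stepMove (m : ℤ) (c : ℤ → ℤ) (t : ℤ) : ℤ :=
  if 0 ≤ t then c t else c (m + t) - c m

lemma stepMove_reverse {c : ℤ → ℤ} (hc : IsStep c) (m t : ℤ) :
    t + stepMove m (fun k => k - c m + c (m - k)) (-t) = stepMove m c t := by
  have h0 := hc.1
  rcases lt_trichotomy t 0 with h | rfl | h
  · simp only [stepMove, if_neg h.not_ge, if_pos (show 0 ≤ -t by omega)]
    rw [show m - -t = m + t by ring]; ring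
  · simp [stepMove, h0]
  · simp only [stepMove, if_pos h.le, if_neg (show ¬ 0 ≤ -t by omega)]
    rw [show m - (m + -t) = t by ring, sub_self, h0]; ring

lemma avgUp_apply {n : ℕ} (x y : Fin n → ℤ) (i : Fin n) :
    avgUp x y i = (x i + y i + 1) / 2 := by
  rw [avgUp, Int.ceil_eq_iff]
  have h : (x i + y i + 1) / 2 * 2 = x i + y i ∨ (x i + y i + 1) / 2 * 2 = x i + y i + 1 := by omega
  generalize (x i + y i + 1) / 2 = z at h
  rcases h with h | h <;> (have h' := congrArg (Int.cast : ℤ → ℚ) h; push_cast at h')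
  · constructor <;> linarith
  · constructor <;> linarith

lemma avgDown_apply {n : ℕ} (x y : Fin n → ℤ) (i : Fin n) :
    avgDown x y i = (x i + y i) / 2 := by
  rw [avgDown, Int.floor_eq_iff]
  have h : (x i + y i) / 2 * 2 = x i + y i ∨ (x i + y i) / 2 * 2 + 1 = x i + y i := by omega
  generalize (x i + y i) / 2 = z at h
  rcases h with h | h <;> (have h' := congrArg (Int.cast : ℤ → ℚ) h; push_cast at h')
  · constructor <;> linarith
  · constructor <;> linarith

lemma natAbs_le_linf {n : ℕ} (z : Fin n → ℤ) (i : Fin n) : (z i).natAbs ≤ linf z :=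
  Finset.le_sup (f := fun i => (z i).natAbs) (Finset.mem_univ i)

lemma exists_natAbs_eq_linf {n : ℕ} {z : Fin n → ℤ} (hz : 0 < linf z) :
    ∃ i, (z i).natAbs = linf z := by
  obtain ⟨i, -, -⟩ := Finset.lt_sup_iff.mp hz
  obtain ⟨j, -, hj⟩ := Finset.exists_mem_eq_sup Finset.univ ⟨i, Finset.mem_univ i⟩
    fun i => (z i).natAbs
  exact ⟨j, hj.symm⟩

lemma DMCSet.avg_mem {n : ℕ} {S : Set (Fin n → ℤ)} (hS : DMCSet S) {x y : Fin n → ℤ}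
    (hx : x ∈ S) (hy : y ∈ S) (h : ∃ i, 2 ≤ (y i - x i).natAbs) :
    (fun i => (x i + y i + 1) / 2) ∈ S ∧ (fun i => (x i + y i) / 2) ∈ S := by
  obtain ⟨i, hi⟩ := h
  have := hS hx hy (le_trans (by simp only [Pi.sub_apply]; omega) (natAbs_le_linf (x - y) i))
  rwa [funext (avgUp_apply x y), funext (avgDown_apply x y)] at this

/-- `S` contains all points selected by step functions between members at distance `m`. -/
def StepClosed {n : ℕ} (S : Set (Fin n → ℤ)) (m : ℤ) : Prop :=
  ∀ ⦃x⦄, x ∈ S → ∀ ⦃y⦄, y ∈ S → (∀ i, ((y i - x i).natAbs : ℤ) ≤ m) →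
    (∃ i, ((y i - x i).natAbs : ℤ) = m) →
    ∀ ⦃c⦄, IsStep c → (fun i => x i + stepMove m c (y i - x i)) ∈ S

/-- A form of `StepClosed` in which the endpoints and the result are only given coordinatewise. -/
lemma StepClosed.mem {n : ℕ} {S : Set (Fin n → ℤ)} {m : ℤ} (h : StepClosed S m)
    {x y z : Fin n → ℤ} (hx : x ∈ S) (hy : y ∈ S) (hle : ∀ i, ((y i - x i).natAbs : ℤ) ≤ m)
    (heq : ∃ i, ((y i - x i).natAbs : ℤ) = m) {c : ℤ → ℤ} (hc : IsStep c)
    (hz : ∀ i, z i = x i + stepMove m c (y i - x i)) : z ∈ S := by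
  rw [funext hz]; exact h hx hy hle heq hc

/-- The first unit step from `x` towards `y` stays in the set. -/
lemma DMCSet.first_step_mem {n : ℕ} {S : Set (Fin n → ℤ)} (hS : DMCSet S) {m : ℤ} (hm : 2 ≤ m)
    (ih : ∀ k, 0 ≤ k → k < m → StepClosed S k) {x y : Fin n → ℤ} (hx : x ∈ S) (hy : y ∈ S)
    (hle : ∀ i, ((y i - x i).natAbs : ℤ) ≤ m) {i₀ : Fin n} (hi₀ : y i₀ - x i₀ = m) :
    (fun i => x i + stepMove m (fun k => min k 1) (y i - x i)) ∈ S := by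
  obtain ⟨hu, hw⟩ := hS.avg_mem hx hy ⟨i₀, by omega⟩
  rcases Int.even_or_odd' m with ⟨h, rfl | rfl⟩
  · refine (ih h (by omega) (by omega)).mem hx hu (fun i => ?_) ⟨i₀, ?_⟩ isStep_min_one
      fun i => ?_
    · have := hle i; omega
    · omega
    · have := hle i; simp only [stepMove]; omega
  · have hv : (fun i => (x i + y i) / 2 + if 0 < y i - x i then 1 else 0) ∈ S := by
      refine (ih (h + 1) (by omega) (by omega)).mem hw hy (fun i => ?_) ⟨i₀, ?_⟩ isStep_min_one
        fun i => ?_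
      · have := hle i; omega
      · omega
      · have := hle i; simp only [stepMove]; omega
    refine (ih (h + 1) (by omega) (by omega)).mem hx hv (fun i => ?_) ⟨i₀, ?_⟩ isStep_min_one
      fun i => ?_
    · have := hle i; omega
    · omega
    · have := hle i; simp only [stepMove]; omega

lemma DMCSet.step_mem_of_eq {n : ℕ} {S : Set (Fin n → ℤ)} (hS : DMCSet S) {m : ℤ} (hm : 2 ≤ m)
    (ih : ∀ k, 0 ≤ k → k < m → StepClosed S k) {x y : Fin n → ℤ} (hx : x ∈ S) (hy : y ∈ S)
    (hle : ∀ i, ((y i - x i).natAbs : ℤ) ≤ m) {i₀ : Fin n} (hi₀ : y i₀ - x i₀ = m)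
    {c : ℤ → ℤ} (hc : IsStep c) :
    (fun i => x i + stepMove m c (y i - x i)) ∈ S := by
  have hfirst := hS.first_step_mem hm ih hx hy hle hi₀
  -- Step functions that may be prescribed after an initial unit increment.
  have hafter : ∀ {c : ℤ → ℤ}, IsStep c →
      (fun i => x i + stepMove m (fun k => min k 1 + (c (max k 1) - c 1)) (y i - x i)) ∈ S := by
    intro c hc
    refine (ih (m - 1) (by omega) (by omega)).mem hfirst hy (fun i => ?_) ⟨i₀, ?_⟩ hc.shift
      fun i => ?_
    · have := hle i; simp only [stepMove]; omega
    · simp only [stepMove]; omega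
    · have := hle i
      generalize y i = yi, x i = xi at *
      simp only [stepMove]
      grind
  have h0 := hc.1
  have h01 := hc.2 0
  have h1m := hc.diff_bounds (show 1 ≤ m by omega)
  rw [zero_add] at h01
  rcases (show c 1 = 1 ∨ c 1 = 0 by omega) with h1 | h1
  · convert hafter hc using 2 with i
    have := hle i
    generalize y i = yi, x i = xi at *
    simp only [stepMove]
    grind
  rcases (show c m + 1 < m ∨ c m = m - 1 by omega) with hr | hr
  · have hpos : ∀ k, 1 ≤ k → k ≤ m → 0 ≤ c k ∧ c k ≤ c m := fun k hk hkm =>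
      ⟨by have := hc.diff_bounds hk; omega, (hc.diff_bounds hkm).1⟩
    refine (ih (c m + 1) (by omega) (by omega)).mem hx (hafter hc) (fun i => ?_) ⟨i₀, ?_⟩
      isStep_sub_one fun i => ?_
    · have := hle i
      generalize y i = yi, x i = xi at *
      simp only [stepMove]
      grind
    · simp only [stepMove]
      grind
    · have := hle i
      generalize y i = yi, x i = xi at *
      simp only [stepMove]
      grind
  have hck : ∀ k, 1 ≤ k → k ≤ m → c k = k - 1 := fun k hk hkm => by
    have := hc.diff_bounds hk
    have := hc.diff_bounds hkm
    omega
  rcases hm.eq_or_lt with rfl | hm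
  · convert (hS.avg_mem hx hy ⟨i₀, by omega⟩).2 using 2 with i
    have := hle i
    generalize y i = yi, x i = xi at *
    simp only [stepMove]
    grind
  have htwo : IsStep fun k => min k 2 := ⟨by simp, fun k => by dsimp only; omega⟩
  have hsecond : (fun i => x i + stepMove m (fun k => if 2 ≤ k then 1 else 0) (y i - x i)) ∈ S := by
    refine (ih 2 (by omega) hm).mem hx (hafter htwo) (fun i => ?_) ⟨i₀, ?_⟩
      isStep_sub_one fun i => ?_
    · have := hle i; simp only [stepMove]; omega
    · simp only [stepMove]; omega
    · have := hle i; simp only [stepMove]; omega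
  refine (ih (m - 1) (by omega) (by omega)).mem hsecond hy (fun i => ?_) ⟨i₀, ?_⟩
    isStep_sub_one fun i => ?_
  · have := hle i; simp only [stepMove]; omega
  · simp only [stepMove]; omega
  · have := hle i
    generalize y i = yi, x i = xi at *
    simp only [stepMove]
    grind

lemma DMCSet.stepClosed {n : ℕ} {S : Set (Fin n → ℤ)} (hS : DMCSet S) (m : ℕ) :
    StepClosed S m := by
  induction m using Nat.strong_induction_on with
  | _ m ih =>
    have ih' : ∀ k : ℤ, 0 ≤ k → k < m → StepClosed S k := by
      intro k hk hkm
      lift k to ℕ using hk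
      exact ih k (by omega)
    intro x hx y hy hle ⟨i₀, hi₀⟩ c hc
    rcases lt_or_ge m 2 with hm | hm
    · have h0 := hc.1
      have h1 := hc.2 0
      rw [zero_add] at h1
      rcases (show c 1 = 0 ∨ c 1 = 1 by omega) with h | h
      · convert hx using 2 with i
        have := hle i
        generalize y i = yi, x i = xi at *
        simp only [stepMove]
        grind
      · convert hy using 2 with i
        have := hle i
        generalize y i = yi, x i = xi at *
        simp only [stepMove]
        grind
    · rcases (show y i₀ - x i₀ = m ∨ x i₀ - y i₀ = m by omega) with e | e
      · exact hS.step_mem_of_eq (by omega) ih' hx hy hle e hc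
      · have := hS.step_mem_of_eq (by omega) ih' hy hx
          (fun i => by have := hle i; omega) e (hc.reverse m)
        convert this using 2 with i
        rw [← stepMove_reverse hc, neg_sub]; ring

/-- Scaling a discrete midpoint convex set preserves discrete midpoint
convexity: `S^α = {x : αx ∈ S}` is discrete midpoint convex. -/
theorem dmcSet_scaling {n : ℕ} (S : Set (Fin n → ℤ)) (hS : DMCSet S)
    (α : ℕ) (hα : 0 < α) :
    DMCSet {x : Fin n → ℤ | (α : ℤ) • x ∈ S} := by
  intro x hx y hy hxy
  simp only [Set.mem_ofPred_eq] at hx hy ⊢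
  obtain ⟨i₀, hi₀⟩ := exists_natAbs_eq_linf (show 0 < linf (x - y) by omega)
  have hle := natAbs_le_linf (x - y)
  generalize linf (x - y) = m at hxy hi₀ hle
  simp only [Pi.sub_apply] at hi₀ hle
  have hα' : (0 : ℤ) < α := by omega
  have habs : ∀ i, (((α : ℤ) • y) i - ((α : ℤ) • x) i).natAbs = α * (x i - y i).natAbs := fun i => by
    simp only [Pi.smul_apply, smul_eq_mul]
    rw [← mul_sub, Int.natAbs_mul, Int.natAbs_natCast, ← Int.natAbs_neg, neg_sub]
  have hline : ∀ k : ℕ, k ≤ α → (fun i => α * x i + k * (y i - x i)) ∈ S := by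
    intro k hk
    refine (hS.stepClosed (α * m)).mem hx hy (fun i => ?_) ⟨i₀, ?_⟩
      (isStep_mul_ediv (k := k) hα' (by omega) (by omega)) fun i => ?_
    · rw [habs]; exact_mod_cast Nat.mul_le_mul_left α (hle i)
    · rw [habs, hi₀]
    · have e : ∀ s : ℤ, (k : ℤ) * (α * s) / α = k * s := fun s => by
        rw [mul_left_comm, Int.mul_ediv_cancel_left _ hα'.ne']
      simp only [Pi.smul_apply, smul_eq_mul, stepMove, ← mul_sub, Nat.cast_mul, ← mul_add, e]
      split_ifs <;> ring
  have hup : ∀ j k : ℕ, k + j ≤ α →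
      (fun i => α * x i + k * (y i - x i) + j * ((y i - x i + 1) / 2)) ∈ S := by
    intro j
    induction j with
    | zero => intro k hk; simpa using hline k hk
    | succ j ih =>
      intro k hk
      convert (hS.avg_mem (ih k (by omega)) (ih (k + 1) (by omega)) ⟨i₀, ?_⟩).1 using 2 with i
      · push_cast; simp only [add_mul, one_mul]; omega
      · push_cast; simp only [add_mul, one_mul]; omega
  have hdown : ∀ j k : ℕ, k + j ≤ α →
      (fun i => α * x i + k * (y i - x i) + j * ((y i - x i) / 2)) ∈ S := by
    intro j
    induction j with
    | zero => intro k hk; simpa using hline k hk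
    | succ j ih =>
      intro k hk
      convert (hS.avg_mem (ih k (by omega)) (ih (k + 1) (by omega)) ⟨i₀, ?_⟩).2 using 2 with i
      · push_cast; simp only [add_mul, one_mul]; omega
      · push_cast; simp only [add_mul, one_mul]; omega
  constructor
  · convert hup α 0 (by omega) using 2 with i
    rw [Pi.smul_apply, avgUp_apply, smul_eq_mul,
      show (x i + y i + 1) / 2 = x i + (y i - x i + 1) / 2 by omega]
    simp [mul_add]
  · convert hdown α 0 (by omega) using 2 with i
    rw [Pi.smul_apply, avgDown_apply, smul_eq_mul,
      show (x i + y i) / 2 = x i + (y i - x i) / 2 by omega]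
    simp [mul_add]
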